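/- arXiv:1006.2502 — 2 statements merged into one kernel-verified Lean document; each statement's English description precedes it below -/
import Mathlib

section
/- For every λ with 0 ≤ λ ≤ 1/√3 and every two-qubit state ω, the partial transpose of (E_λ⊗E_λ)[ω] is positive semidefinite; conversely, if 1/√3 < λ ≤ 1, then the partial transpose of (E_λ⊗E_λ)[P₊] (where P₊ is the projection onto the maximally entangled vector (|00⟩+|11⟩)/√2) has a negative eigenvalue, so (E_λ⊗E_λ)[P₊] is entangled. By the two-qubit Peres–Horodecki criterion this means the qubit depolarizing channel E_λ is 2-locally entanglement-annihilating if and only if λ ≤ 1/√3. -/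
open Matrix
open scoped Kronecker ComplexOrder

/-- A quantum state: a positive semidefinite matrix of unit trace. -/
def IsState {ι : Type} [Fintype ι] (ρ : Matrix ι ι ℂ) : Prop :=
  ρ.PosSemidef ∧ ρ.trace = 1

/-- Separability of a bipartite state across the `ιA | ιB` cut: a finite convex
combination of Kronecker products of states. -/
def IsSep {ιA ιB : Type} [Fintype ιA] [Fintype ιB]
    (ω : Matrix (ιA × ιB) (ιA × ιB) ℂ) : Prop :=
  ∃ (m : ℕ) (p : Fin m → ℝ) (ξ : Fin m → Matrix ιA ιA ℂ) (ζ : Fin m → Matrix ιB ιB ℂ),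
    (∀ j, 0 ≤ p j) ∧ ((∑ j, p j) = 1) ∧ (∀ j, IsState (ξ j)) ∧ (∀ j, IsState (ζ j)) ∧
    ω = ∑ j, (p j : ℂ) • (ξ j ⊗ₖ ζ j)

/-- The extension `E ⊗ id` of a map `E` by a trivial action on an `n`-dimensional ancilla. -/
def tensorId {ι : Type} (E : Matrix ι ι ℂ → Matrix ι ι ℂ) (n : ℕ)
    (X : Matrix (ι × Fin n) (ι × Fin n) ℂ) : Matrix (ι × Fin n) (ι × Fin n) ℂ :=
  Matrix.of fun p q => E (Matrix.of fun a c => X (a, p.2) (c, q.2)) p.1 q.1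

/-- A quantum channel: a linear, trace-preserving, completely positive map. -/
def IsChannel {ι : Type} [Fintype ι] (E : Matrix ι ι ℂ → Matrix ι ι ℂ) : Prop :=
  (∀ (c : ℂ) (X Y : Matrix ι ι ℂ), E (c • X + Y) = c • E X + E Y) ∧
  (∀ X, (E X).trace = X.trace) ∧
  (∀ (n : ℕ) (X : Matrix (ι × Fin n) (ι × Fin n) ℂ), X.PosSemidef → (tensorId E n X).PosSemidef)

/-- Entanglement-breaking channel: `E ⊗ id` maps every state to a separable state,
for every ancilla dimension `n ≥ 1`. -/
def IsEB {ι : Type} [Fintype ι] (E : Matrix ι ι ℂ → Matrix ι ι ℂ) : Prop :=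
  ∀ (n : ℕ), 0 < n → ∀ ω : Matrix (ι × Fin n) (ι × Fin n) ℂ,
    IsState ω → IsSep (tensorId E n ω)

/-- Entanglement-annihilating channel on a bipartite system: every state is mapped
to a separable state. -/
def IsEA {ιA ιB : Type} [Fintype ιA] [Fintype ιB]
    (E : Matrix (ιA × ιB) (ιA × ιB) ℂ → Matrix (ιA × ιB) (ιA × ιB) ℂ) : Prop :=
  ∀ ω : Matrix (ιA × ιB) (ιA × ιB) ℂ, IsState ω → IsSep (E ω)

/-- The map `F ⊗ id` acting as `F` on the first factor of a bipartite system. -/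
def rTensor {ιA ιB : Type} (F : Matrix ιA ιA ℂ → Matrix ιA ιA ℂ)
    (X : Matrix (ιA × ιB) (ιA × ιB) ℂ) : Matrix (ιA × ιB) (ιA × ιB) ℂ :=
  Matrix.of fun p q => F (Matrix.of fun a c => X (a, p.2) (c, q.2)) p.1 q.1

/-- The map `id ⊗ F` acting as `F` on the second factor of a bipartite system. -/
def lTensor {ιA ιB : Type} (F : Matrix ιB ιB ℂ → Matrix ιB ιB ℂ)
    (X : Matrix (ιA × ιB) (ιA × ιB) ℂ) : Matrix (ιA × ιB) (ιA × ιB) ℂ :=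
  Matrix.of fun p q => F (Matrix.of fun b d => X (p.1, b) (q.1, d)) p.2 q.2

/-- The local map `E ⊗ F` on a bipartite system (for linear `E`, `F` this is the
usual tensor product map `(id ⊗ F) ∘ (E ⊗ id)`). -/
def tensorMap {ιA ιB : Type} (E : Matrix ιA ιA ℂ → Matrix ιA ιA ℂ)
    (F : Matrix ιB ιB ℂ → Matrix ιB ιB ℂ)
    (X : Matrix (ιA × ιB) (ιA × ιB) ℂ) : Matrix (ιA × ιB) (ιA × ιB) ℂ :=
  lTensor F (rTensor E X)

/-- `k`-fold Kronecker product of single-particle matrices. -/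
def kronPow {d k : ℕ} (ρ : Fin k → Matrix (Fin d) (Fin d) ℂ) :
    Matrix (Fin k → Fin d) (Fin k → Fin d) ℂ :=
  Matrix.of fun i j => ∏ t, ρ t (i t) (j t)

/-- Full separability of a `k`-partite state: a finite convex combination of
`k`-fold Kronecker products of single-particle states. -/
def IsFullySep {d k : ℕ} (ω : Matrix (Fin k → Fin d) (Fin k → Fin d) ℂ) : Prop :=
  ∃ (m : ℕ) (p : Fin m → ℝ) (ρ : Fin m → Fin k → Matrix (Fin d) (Fin d) ℂ),
    (∀ j, 0 ≤ p j) ∧ ((∑ j, p j) = 1) ∧ (∀ j t, IsState (ρ j t)) ∧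
    ω = ∑ j, (p j : ℂ) • kronPow (ρ j)

/-- The map applying `E` to the `t`-th particle of a `k`-partite system. -/
def applyAt {d k : ℕ} (E : Matrix (Fin d) (Fin d) ℂ → Matrix (Fin d) (Fin d) ℂ) (t : Fin k)
    (X : Matrix (Fin k → Fin d) (Fin k → Fin d) ℂ) :
    Matrix (Fin k → Fin d) (Fin k → Fin d) ℂ :=
  Matrix.of fun i j =>
    E (Matrix.of fun a b => X (Function.update i t a) (Function.update j t b)) (i t) (j t)

/-- The `k`-fold tensor power `E ⊗ ⋯ ⊗ E` of a single-particle map `E`,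
obtained by applying `E` to each of the `k` particles. -/
def tensorPow {d : ℕ} (E : Matrix (Fin d) (Fin d) ℂ → Matrix (Fin d) (Fin d) ℂ) (k : ℕ)
    (X : Matrix (Fin k → Fin d) (Fin k → Fin d) ℂ) :
    Matrix (Fin k → Fin d) (Fin k → Fin d) ℂ :=
  (List.finRange k).foldr (applyAt E) X

/-- The qubit depolarizing channel `E_λ[X] = λ X + (1-λ) tr(X) I/2`. -/
noncomputable def depol (lam : ℝ) (X : Matrix (Fin 2) (Fin 2) ℂ) : Matrix (Fin 2) (Fin 2) ℂ :=
  (lam : ℂ) • X + ((1 - lam : ℝ) : ℂ) • X.trace • ((2 : ℂ)⁻¹ • (1 : Matrix (Fin 2) (Fin 2) ℂ))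

/-- The maximally entangled two-qubit vector `(|00⟩ + |11⟩)/√2`. -/
noncomputable def psiPlus : (Fin 2 × Fin 2) → ℂ :=
  fun p => if p.1 = p.2 then ((Real.sqrt 2 : ℝ) : ℂ)⁻¹ else 0

/-- The projection onto the maximally entangled two-qubit vector. -/
noncomputable def Pplus : Matrix (Fin 2 × Fin 2) (Fin 2 × Fin 2) ℂ :=
  Matrix.vecMulVec psiPlus (star psiPlus)

/-- Partial transposition on the second qubit of a two-qubit matrix. -/
def ptB (X : Matrix (Fin 2 × Fin 2) (Fin 2 × Fin 2) ℂ) :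
    Matrix (Fin 2 × Fin 2) (Fin 2 × Fin 2) ℂ :=
  Matrix.of fun p q => X (p.1, q.2) (q.1, p.2)

/-- Partial transposition on the first factor (qubit 1 versus qubits 2,3). -/
def pt1 (X : Matrix (Fin 2 × Fin 2 × Fin 2) (Fin 2 × Fin 2 × Fin 2) ℂ) :
    Matrix (Fin 2 × Fin 2 × Fin 2) (Fin 2 × Fin 2 × Fin 2) ℂ :=
  Matrix.of fun p q => X (q.1, p.2) (p.1, q.2)

/-- The three-qubit GHZ vector `(|000⟩ + |111⟩)/√2`. -/
noncomputable def ghzVec : (Fin 2 × Fin 2 × Fin 2) → ℂ :=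
  fun p => if p.1 = p.2.1 ∧ p.2.1 = p.2.2 then ((Real.sqrt 2 : ℝ) : ℂ)⁻¹ else 0

/-- The three-qubit GHZ state `|GHZ⟩⟨GHZ|`. -/
noncomputable def ghzState : Matrix (Fin 2 × Fin 2 × Fin 2) (Fin 2 × Fin 2 × Fin 2) ℂ :=
  Matrix.vecMulVec ghzVec (star ghzVec)


/-- Bloch-vector parametrisation of a qubit matrix. -/
noncomputable def blochM (x y z : ℝ) : Matrix (Fin 2) (Fin 2) ℂ :=
  !![(1 + z) / 2, (x - y * Complex.I) / 2; (x + y * Complex.I) / 2, (1 - z) / 2]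

lemma blochM_herm (x y z : ℝ) : (blochM x y z)ᴴ = blochM x y z := by
  ext i j
  fin_cases i <;> fin_cases j <;> simp [blochM] <;> ring

lemma blochM_state (x y z : ℝ) (h : x ^ 2 + y ^ 2 + z ^ 2 ≤ 1) : IsState (blochM x y z) := by
  constructor
  · have key : blochM x y z = (blochM x y z)ᴴ * blochM x y z +
        (((1 - (x ^ 2 + y ^ 2 + z ^ 2)) / 4 : ℝ) : ℂ) • (1 : Matrix (Fin 2) (Fin 2) ℂ) := by
      rw [blochM_herm]
      have hI := Complex.I_sq
      ext i j
      fin_cases i <;> fin_cases j <;> simp [blochM, Matrix.mul_apply, Fin.sum_univ_two] <;>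
        ring_nf <;> simp only [hI] <;> ring
    rw [key]
    refine (Matrix.posSemidef_conjTranspose_mul_self _).add ?_
    refine Matrix.PosSemidef.one.smul ?_
    rw [Complex.zero_le_real]
    linarith
  · simp [blochM, Matrix.trace_fin_two]
    ring

/-- Product states. -/
def prodStates : Set (Matrix (Fin 2 × Fin 2) (Fin 2 × Fin 2) ℂ) :=
  {X | ∃ ξ ζ : Matrix (Fin 2) (Fin 2) ℂ, IsState ξ ∧ IsState ζ ∧ X = ξ ⊗ₖ ζ}

lemma isSep_of_mem {X : Matrix (Fin 2 × Fin 2) (Fin 2 × Fin 2) ℂ}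
    (h : X ∈ convexHull ℝ prodStates) : IsSep X := by
  rw [mem_convexHull_iff_exists_fintype] at h
  obtain ⟨ι, _, w, z, hw0, hw1, hz, hx⟩ := h
  choose ξ ζ h1 h2 h3 using hz
  let e := Fintype.equivFin ι
  refine ⟨Fintype.card ι, fun j => w (e.symm j), fun j => ξ (e.symm j), fun j => ζ (e.symm j),
    fun j => hw0 _, ?_, fun j => h1 _, fun j => h2 _, ?_⟩
  · rw [← hw1]; exact Equiv.sum_comp e.symm w
  · rw [← hx, ← Equiv.sum_comp e.symm]
    refine Finset.sum_congr rfl fun j _ => ?_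
    rw [h3]
    ext; simp

/-- The two-sided depolarizing map as a linear map. -/
noncomputable def depolT (lam : ℝ) : Matrix (Fin 2 × Fin 2) (Fin 2 × Fin 2) ℂ →ₗ[ℂ]
    Matrix (Fin 2 × Fin 2) (Fin 2 × Fin 2) ℂ where
  toFun := tensorMap (depol lam) (depol lam)
  map_add' X Y := by
    ext ⟨i, k⟩ ⟨j, l⟩
    simp [tensorMap, lTensor, rTensor, depol, Matrix.trace_fin_two]
    ring
  map_smul' c X := by
    ext ⟨i, k⟩ ⟨j, l⟩
    simp [tensorMap, lTensor, rTensor, depol, Matrix.trace_fin_two]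
    ring

lemma depolT_apply (lam : ℝ) (X : Matrix (Fin 2 × Fin 2) (Fin 2 × Fin 2) ℂ) :
    depolT lam X = tensorMap (depol lam) (depol lam) X := rfl

lemma depolT_kron (lam : ℝ) (A B : Matrix (Fin 2) (Fin 2) ℂ) :
    depolT lam (A ⊗ₖ B) = depol lam A ⊗ₖ depol lam B := by
  rw [depolT_apply]
  ext ⟨i, k⟩ ⟨j, l⟩
  simp [tensorMap, lTensor, rTensor, depol, Matrix.trace_fin_two]
  ring

lemma depol_conj (lam : ℝ) (U A : Matrix (Fin 2) (Fin 2) ℂ) (hU : U * Uᴴ = 1) (hU' : Uᴴ * U = 1) :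
    depol lam (U * A * Uᴴ) = U * depol lam A * Uᴴ := by
  have : (U * A * Uᴴ).trace = A.trace := by
    rw [Matrix.trace_mul_comm, ← Matrix.mul_assoc, hU', Matrix.one_mul]
  simp [depol, this, Matrix.mul_add, Matrix.add_mul, hU]

lemma depolT_conj (lam : ℝ) (U V : Matrix (Fin 2) (Fin 2) ℂ) (hU : U * Uᴴ = 1) (hU' : Uᴴ * U = 1)
    (hV : V * Vᴴ = 1) (hV' : Vᴴ * V = 1) (X : Matrix (Fin 2 × Fin 2) (Fin 2 × Fin 2) ℂ) :
    depolT lam ((U ⊗ₖ V) * X * (U ⊗ₖ V)ᴴ) = (U ⊗ₖ V) * depolT lam X * (U ⊗ₖ V)ᴴ := by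
  let C : Matrix (Fin 2 × Fin 2) (Fin 2 × Fin 2) ℂ →ₗ[ℂ] Matrix (Fin 2 × Fin 2) (Fin 2 × Fin 2) ℂ :=
    (LinearMap.mulRight ℂ (U ⊗ₖ V)ᴴ) ∘ₗ (LinearMap.mulLeft ℂ (U ⊗ₖ V))
  have : depolT lam ∘ₗ C = C ∘ₗ depolT lam := by
    apply Matrix.ext_linearMap
    rintro ⟨i, k⟩ ⟨j, l⟩
    ext1
    have h1 : Matrix.single (i, k) (j, l) (1 : ℂ) =
        Matrix.single i j (1 : ℂ) ⊗ₖ Matrix.single k l (1 : ℂ) := by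
      rw [Matrix.single_kronecker_single, one_mul]
    simp only [C, LinearMap.comp_apply, LinearMap.mulRight_apply, LinearMap.mulLeft_apply,
      Matrix.singleLinearMap_apply, h1, Matrix.conjTranspose_kronecker, ← Matrix.mul_kronecker_mul,
      depolT_kron, depol_conj lam U _ hU hU', depol_conj lam V _ hV hV']
  exact LinearMap.congr_fun this X

lemma conj_state (U A : Matrix (Fin 2) (Fin 2) ℂ) (hU' : Uᴴ * U = 1) (hA : IsState A) :
    IsState (U * A * Uᴴ) := by
  refine ⟨hA.1.mul_mul_conjTranspose_same U, ?_⟩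
  rw [Matrix.trace_mul_comm, ← Matrix.mul_assoc, hU', Matrix.one_mul, hA.2]

/-- Schmidt-diagonal vector. -/
noncomputable def phiV (a b : ℝ) : Fin 2 × Fin 2 → ℂ :=
  fun p => if p.1 = p.2 then (if p.1 = 0 then (a : ℂ) else (b : ℂ)) else 0

/-- A sign. -/
def sgnB (e : Bool) : ℝ := if e then 1 else -1

lemma depolT_phi (lam a b t : ℝ) (hab : a ^ 2 + b ^ 2 = 1) (ht : t ^ 2 = 2 * a * b * lam ^ 2) :
    depolT lam (Matrix.vecMulVec (phiV a b) (star (phiV a b))) =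
      ∑ e : Bool × Bool × Bool, ((1 + sgnB e.2.2 * (a ^ 2 - b ^ 2)) / 8) •
        (blochM (sgnB e.1 * t) (sgnB e.2.1 * t) (sgnB e.2.2 * lam) ⊗ₖ
         blochM (sgnB e.1 * t) (- (sgnB e.2.1 * t)) (sgnB e.2.2 * lam)) := by
  have hb : (b : ℂ) ^ 2 = 1 - (a : ℂ) ^ 2 := by
    rw [eq_sub_iff_add_eq, add_comm]; exact_mod_cast hab
  have ht' : (t : ℂ) ^ 2 = 2 * a * b * lam ^ 2 := by exact_mod_cast ht
  have hI := Complex.I_sq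
  rw [depolT_apply]
  ext ⟨i, k⟩ ⟨j, l⟩
  simp only [Fintype.sum_prod_type, Fintype.sum_bool, sgnB]
  fin_cases i <;> fin_cases j <;> fin_cases k <;> fin_cases l <;>
    simp [tensorMap, lTensor, rTensor, depol, Matrix.trace_fin_two, blochM, phiV,
      Matrix.vecMulVec_apply] <;>
    ring_nf <;> (try simp only [hI, ht', hb]) <;> ring_nf <;> (try simp only [hI, ht', hb]) <;> ring

lemma unit_col (p q : ℂ) : ∃ (n : ℝ) (u v : ℂ), 0 ≤ n ∧ star u * u + star v * v = 1 ∧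
    p = n * u ∧ q = n * v ∧ (n = 0 → p = 0 ∧ q = 0) := by
  by_cases h : p = 0 ∧ q = 0
  · exact ⟨0, 1, 0, le_rfl, by simp, by simp [h.1], by simp [h.2], fun _ => h⟩
  · set m : ℝ := Complex.normSq p + Complex.normSq q with hm
    have hm0 : 0 < m := by
      have h1 := Complex.normSq_nonneg p
      have h2 := Complex.normSq_nonneg q
      by_contra hc
      apply h
      exact ⟨Complex.normSq_eq_zero.1 (by linarith), Complex.normSq_eq_zero.1 (by linarith)⟩
    have hn : 0 < Real.sqrt m := Real.sqrt_pos.2 hm0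
    have hnc : ((Real.sqrt m : ℝ) : ℂ) ≠ 0 := by exact_mod_cast hn.ne'
    refine ⟨Real.sqrt m, p / Real.sqrt m, q / Real.sqrt m, hn.le, ?_, ?_, ?_, ?_⟩
    · have hs : ((Real.sqrt m : ℝ) : ℂ) ^ 2 = star p * p + star q * q := by
        have e1 : star p * p = (Complex.normSq p : ℂ) := by
          rw [Complex.normSq_eq_conj_mul_self]; rfl
        have e2 : star q * q = (Complex.normSq q : ℂ) := by
          rw [Complex.normSq_eq_conj_mul_self]; rfl
        rw [e1, e2, ← Complex.ofReal_pow, Real.sq_sqrt hm0.le, hm, Complex.ofReal_add]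
      have hst : ∀ z : ℂ, star (z / ((Real.sqrt m : ℝ) : ℂ)) = star z / ((Real.sqrt m : ℝ) : ℂ) := by
        intro z; simp
      rw [hst, hst]
      field_simp
      exact hs.symm
    · field_simp
    · field_simp
    · intro h0; exact absurd h0 hn.ne'

lemma orth_cols (p q r s : ℂ) (h : star p * r + star q * s = 0) :
    ∃ (n : ℝ) (u v α : ℂ), 0 ≤ n ∧ star u * u + star v * v = 1 ∧
    p = n * u ∧ q = n * v ∧ r = α * (- star v) ∧ s = α * star u := by
  obtain ⟨n, u, v, hn, huv, hp, hq, h0⟩ := unit_col p q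
  by_cases hn0 : n = 0
  · obtain ⟨m, u', v', hm, huv', hr, hs, -⟩ := unit_col r s
    refine ⟨0, star v', - star u', m, le_rfl, ?_, ?_, ?_, ?_, ?_⟩
    · simp only [star_neg, star_star]; linear_combination huv'
    · simp [(h0 hn0).1]
    · simp [(h0 hn0).2]
    · simp [hr]
    · simp [hs]
  · have hnc : (n : ℂ) ≠ 0 := by exact_mod_cast hn0
    have ho : star u * r + star v * s = 0 := by
      apply mul_left_cancel₀ hnc
      rw [hp, hq] at h
      simp only [star_mul'] at h
      have : star (n : ℂ) = n := Complex.conj_ofReal n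
      rw [this] at h
      linear_combination h
    refine ⟨n, u, v, u * s - v * r, hn, huv, hp, hq, ?_, ?_⟩
    · linear_combination (-r) * huv + u * ho
    · linear_combination (-s) * huv + v * ho

lemma svd_two (A : Matrix (Fin 2) (Fin 2) ℂ) : ∃ (U V : Matrix (Fin 2) (Fin 2) ℂ) (a b : ℝ),
    Uᴴ * U = 1 ∧ Vᴴ * V = 1 ∧ 0 ≤ a ∧ 0 ≤ b ∧ A = U * !![(a : ℂ), 0; 0, (b : ℂ)] * Vᵀ := by
  have hH : (Aᴴ * A).IsHermitian := Matrix.isHermitian_conjTranspose_mul_self A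
  set W : Matrix (Fin 2) (Fin 2) ℂ := (hH.eigenvectorUnitary : Matrix (Fin 2) (Fin 2) ℂ) with hW
  have hW1 : Wᴴ * W = 1 := Unitary.coe_star_mul_self hH.eigenvectorUnitary
  have hW2 : W * Wᴴ = 1 := Unitary.coe_mul_star_self hH.eigenvectorUnitary
  have hd : (A * W)ᴴ * (A * W) = Matrix.diagonal (RCLike.ofReal ∘ hH.eigenvalues) := by
    rw [← hH.conjStarAlgAut_star_eigenvectorUnitary, Unitary.conjStarAlgAut_star_apply,
      Matrix.conjTranspose_mul]
    simp only [Matrix.mul_assoc]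
    rfl
  set B := A * W with hB
  have ho : star (B 0 0) * B 0 1 + star (B 1 0) * B 1 1 = 0 := by
    have := congrFun (congrFun hd 0) 1
    simpa [Matrix.mul_apply, Fin.sum_univ_two] using this
  obtain ⟨n, u, v, α, hn, huv, hp, hq, hr, hs⟩ := orth_cols _ _ _ _ ho
  obtain ⟨e, he, hα⟩ : ∃ e : ℂ, star e * e = 1 ∧ α = ‖α‖ * e := by
    refine ⟨Complex.exp (Complex.arg α * Complex.I), ?_, (Complex.norm_mul_exp_arg_mul_I α).symm⟩
    have : star (Complex.exp (Complex.arg α * Complex.I)) *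
      Complex.exp (Complex.arg α * Complex.I) =
      (Complex.normSq (Complex.exp (Complex.arg α * Complex.I)) : ℂ) := by
        rw [Complex.normSq_eq_conj_mul_self]; rfl
    rw [this, Complex.normSq_eq_norm_sq, Complex.norm_exp_ofReal_mul_I]
    simp
  refine ⟨!![u, e * (- star v); v, e * star u], Wᴴᵀ, n, ‖α‖, ?_, ?_, hn, norm_nonneg _, ?_⟩
  · simp only [Complex.star_def] at huv he
    ext i j
    fin_cases i <;> fin_cases j <;> simp [Matrix.mul_apply, Fin.sum_univ_two]
    · exact huv
    · ring
    · ring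
    · linear_combination huv * ((starRingEnd ℂ) e * e) + he
  · have := congrArg Matrix.transpose hW1
    rw [Matrix.transpose_mul, Matrix.transpose_one] at this
    rw [← this]
    congr 1
    ext; simp
  · have hBA : A = B * Wᴴ := by rw [hB, Matrix.mul_assoc, hW2, Matrix.mul_one]
    rw [Matrix.transpose_transpose]
    conv_lhs => rw [hBA]
    congr 1
    ext i j
    fin_cases i <;> fin_cases j <;> simp [Matrix.mul_apply, Fin.sum_univ_two]
    · rw [hp]; ring
    · rw [hr]; simp only [Complex.star_def]; linear_combination (-(starRingEnd ℂ) v) * hα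
    · rw [hq]; ring
    · rw [hs]; simp only [Complex.star_def]; linear_combination ((starRingEnd ℂ) u) * hα

lemma pure_mem (lam : ℝ) (hl : 3 * lam ^ 2 ≤ 1) (ψ : Fin 2 × Fin 2 → ℂ)
    (hψ : (Matrix.vecMulVec ψ (star ψ)).trace = 1) :
    depolT lam (Matrix.vecMulVec ψ (star ψ)) ∈ convexHull ℝ prodStates := by
  obtain ⟨U, V, a, b, hU, hV, ha, hb, hA⟩ := svd_two (Matrix.of fun i k => ψ (i, k))
  have hU2 : U * Uᴴ = 1 := mul_eq_one_comm.1 hU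
  have hV2 : V * Vᴴ = 1 := mul_eq_one_comm.1 hV
  have hφ : ψ = (U ⊗ₖ V) *ᵥ phiV a b := by
    ext ⟨i, k⟩
    have := congrFun (congrFun hA i) k
    simp [Matrix.mul_apply, Fin.sum_univ_two] at this
    rw [this]
    simp [Matrix.mulVec, dotProduct, Fintype.sum_prod_type, Fin.sum_univ_two, phiV]
    ring
  have hc : Matrix.vecMulVec ψ (star ψ) =
      (U ⊗ₖ V) * Matrix.vecMulVec (phiV a b) (star (phiV a b)) * (U ⊗ₖ V)ᴴ := by
    rw [Matrix.mul_vecMulVec, Matrix.vecMulVec_mul, hφ, Matrix.star_mulVec]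
  have hab : a ^ 2 + b ^ 2 = 1 := by
    rw [hc, Matrix.trace_mul_comm, ← Matrix.mul_assoc, Matrix.conjTranspose_kronecker,
      ← Matrix.mul_kronecker_mul, hU, hV, Matrix.one_kronecker_one, Matrix.one_mul] at hψ
    simp [Matrix.trace, Fintype.sum_prod_type, Fin.sum_univ_two, phiV, Matrix.vecMulVec_apply] at hψ
    have : ((a ^ 2 + b ^ 2 : ℝ) : ℂ) = ((1 : ℝ) : ℂ) := by
      push_cast; linear_combination hψ
    exact_mod_cast this
  have hab0 : 0 ≤ a * b := mul_nonneg ha hb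
  have ht : (Real.sqrt (2 * a * b) * lam) ^ 2 = 2 * a * b * lam ^ 2 := by
    rw [mul_pow, Real.sq_sqrt (by linarith)]
  set t := Real.sqrt (2 * a * b) * lam
  rw [hc, depolT_conj lam U V hU2 hU hV2 hV, depolT_phi lam a b t hab ht,
    Finset.mul_sum, Finset.sum_mul]
  have hbl : ∀ x y z : ℝ, x ^ 2 = t ^ 2 → y ^ 2 = t ^ 2 → z ^ 2 = lam ^ 2 →
      IsState (blochM x y z) := by
    intro x y z hx hy hz
    apply blochM_state
    rw [hx, hy, hz, ht]
    nlinarith [mul_nonneg (sq_nonneg (a - b)) (sq_nonneg lam)]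
  have hsg : ∀ e, (sgnB e) ^ 2 = 1 := by intro e; cases e <;> simp [sgnB]
  refine mem_convexHull_of_exists_fintype
    (fun e : Bool × Bool × Bool => (1 + sgnB e.2.2 * (a ^ 2 - b ^ 2)) / 8)
    (fun e => (U * blochM (sgnB e.1 * t) (sgnB e.2.1 * t) (sgnB e.2.2 * lam) * Uᴴ) ⊗ₖ
         (V * blochM (sgnB e.1 * t) (- (sgnB e.2.1 * t)) (sgnB e.2.2 * lam) * Vᴴ)) ?_ ?_ ?_ ?_
  · rintro ⟨e1, e2, e3⟩
    cases e3 <;> simp [sgnB] <;> nlinarith [sq_nonneg a, sq_nonneg b]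
  · simp [Fintype.sum_prod_type, sgnB]; ring
  · intro e
    refine ⟨_, _, conj_state U _ hU (hbl _ _ _ ?_ ?_ ?_), conj_state V _ hV (hbl _ _ _ ?_ ?_ ?_), rfl⟩ <;>
      simp [mul_pow, hsg]
  · refine Finset.sum_congr rfl fun e _ => ?_
    rw [Matrix.mul_kronecker_mul, Matrix.mul_kronecker_mul, Matrix.conjTranspose_kronecker]
    simp

lemma sep_of_le (lam : ℝ) (hl : 3 * lam ^ 2 ≤ 1) (ω : Matrix (Fin 2 × Fin 2) (Fin 2 × Fin 2) ℂ)
    (hω : IsState ω) : IsSep (tensorMap (depol lam) (depol lam) ω) := by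
  apply isSep_of_mem
  rw [← depolT_apply]
  have hH := hω.1.isHermitian
  set W : Matrix (Fin 2 × Fin 2) (Fin 2 × Fin 2) ℂ := (hH.eigenvectorUnitary :
    Matrix (Fin 2 × Fin 2) (Fin 2 × Fin 2) ℂ) with hW
  have hW1 : Wᴴ * W = 1 := Unitary.coe_star_mul_self hH.eigenvectorUnitary
  have hs : ω = ∑ i, (hH.eigenvalues i) • Matrix.vecMulVec (fun p => W p i) (star fun p => W p i) := by
    have h1 : ω = W * Matrix.diagonal (RCLike.ofReal ∘ hH.eigenvalues) * Wᴴ := by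
      conv_lhs => rw [hH.spectral_theorem, Unitary.conjStarAlgAut_apply]
      rfl
    conv_lhs => rw [h1]
    ext p q
    rw [Matrix.mul_apply, Matrix.sum_apply]
    refine Finset.sum_congr rfl fun i _ => ?_
    simp [Matrix.mul_diagonal, Matrix.vecMulVec_apply]
    ring
  have hsum : ∑ i, hH.eigenvalues i = 1 := by
    have := hH.trace_eq_sum_eigenvalues
    rw [hω.2] at this
    have h2 : ((∑ i, hH.eigenvalues i : ℝ) : ℂ) = ((1 : ℝ) : ℂ) := by
      push_cast; exact this.symm
    exact_mod_cast h2
  have hT : depolT lam ω = ∑ i, (hH.eigenvalues i) •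
      depolT lam (Matrix.vecMulVec (fun p => W p i) (star fun p => W p i)) := by
    conv_lhs => rw [hs]
    rw [map_sum]
    refine Finset.sum_congr rfl fun i _ => ?_
    exact LinearMap.map_smul_of_tower _ _ _
  rw [hT]
  refine (convex_convexHull ℝ _).sum_mem (fun i _ => hω.1.eigenvalues_nonneg i) hsum fun i _ => ?_
  apply pure_mem lam hl
  have := congrFun (congrFun hW1 i) i
  rw [Matrix.one_apply_eq, Matrix.mul_apply] at this
  rw [← this, Matrix.trace]
  refine Finset.sum_congr rfl fun p _ => ?_
  simp [Matrix.vecMulVec_apply, mul_comm]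

lemma ppt_of_sep (X : Matrix (Fin 2 × Fin 2) (Fin 2 × Fin 2) ℂ) (h : IsSep X) :
    (ptB X).PosSemidef := by
  obtain ⟨m, p, ξ, ζ, hp, -, h1, h2, rfl⟩ := h
  have : ptB (∑ j, (p j : ℂ) • (ξ j ⊗ₖ ζ j)) = ∑ j, (p j : ℂ) • (ξ j ⊗ₖ (ζ j)ᵀ) := by
    ext ⟨i, k⟩ ⟨j, l⟩
    simp [ptB, Matrix.sum_apply]
  rw [this]
  refine Matrix.posSemidef_sum _ fun j _ => ?_
  exact ((h1 j).1.kronecker (h2 j).1.transpose).smul (by rw [Complex.zero_le_real]; exact hp j)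

/-- The singlet direction. -/
def singV : Fin 2 × Fin 2 → ℂ := fun p => if p = (0, 1) then 1 else if p = (1, 0) then -1 else 0

lemma eig_neg (lam : ℝ) : (ptB (tensorMap (depol lam) (depol lam) Pplus)).mulVec singV =
    (((1 - 3 * lam ^ 2) / 4 : ℝ) : ℂ) • singV := by
  have h2 : ((Real.sqrt 2 : ℝ) : ℂ)⁻¹ * ((Real.sqrt 2 : ℝ) : ℂ)⁻¹ = 1 / 2 := by
    rw [← mul_inv, ← Complex.ofReal_mul, Real.mul_self_sqrt (by norm_num)]; norm_num
  ext ⟨i, k⟩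
  fin_cases i <;> fin_cases k <;>
    simp [Matrix.mulVec, dotProduct, Fintype.sum_prod_type, Fin.sum_univ_two, ptB, tensorMap,
      lTensor, rTensor, depol, Matrix.trace_fin_two, Pplus, psiPlus, Matrix.vecMulVec_apply,
      singV, h2] <;> ring

lemma Pplus_state : IsState Pplus := by
  have h2 : ((Real.sqrt 2 : ℝ) : ℂ)⁻¹ * ((Real.sqrt 2 : ℝ) : ℂ)⁻¹ = 1 / 2 := by
    rw [← mul_inv, ← Complex.ofReal_mul, Real.mul_self_sqrt (by norm_num)]; norm_num
  refine ⟨Matrix.posSemidef_vecMulVec_self_star _, ?_⟩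
  simp [Matrix.trace, Fintype.sum_prod_type, Fin.sum_univ_two, Pplus, psiPlus,
    Matrix.vecMulVec_apply, h2]

lemma not_sep (lam : ℝ) (hl : 1 < 3 * lam ^ 2) :
    ¬ IsSep (tensorMap (depol lam) (depol lam) Pplus) := by
  intro h
  have h1 := (ppt_of_sep _ h).dotProduct_mulVec_nonneg singV
  rw [eig_neg] at h1
  have h3 : star singV ⬝ᵥ ((((1 - 3 * lam ^ 2) / 4 : ℝ) : ℂ) • singV) =
      (((1 - 3 * lam ^ 2) / 2 : ℝ) : ℂ) := by
    simp [dotProduct, Fintype.sum_prod_type, Fin.sum_univ_two, singV]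
    ring
  rw [h3, Complex.zero_le_real] at h1
  linarith

lemma le_iff (lam : ℝ) (h0 : 0 ≤ lam) : lam ≤ (Real.sqrt 3)⁻¹ ↔ 3 * lam ^ 2 ≤ 1 := by
  rw [← Real.sqrt_inv, Real.le_sqrt h0 (by norm_num)]
  constructor <;> intro h <;> linarith

/-- `(E_λ ⊗ E_λ)[ω]` has positive partial transpose for every two-qubit
state `ω` iff `λ ≤ 1/√3`; for `λ > 1/√3` the partial transpose of `(E_λ ⊗ E_λ)[P₊]` has
a negative eigenvalue and the state is entangled. Hence (by the two-qubit
Peres–Horodecki criterion) `E_λ` is 2-locally entanglement-annihilating iff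
`λ ≤ 1/√3`. -/
theorem stmt_15 :
    (∀ lam : ℝ, 0 ≤ lam → lam ≤ (Real.sqrt 3)⁻¹ →
      ∀ ω : Matrix (Fin 2 × Fin 2) (Fin 2 × Fin 2) ℂ, IsState ω →
        (ptB (tensorMap (depol lam) (depol lam) ω)).PosSemidef) ∧
    (∀ lam : ℝ, (Real.sqrt 3)⁻¹ < lam → lam ≤ 1 →
      (∃ (μ : ℝ) (v : (Fin 2 × Fin 2) → ℂ), μ < 0 ∧ v ≠ 0 ∧
        (ptB (tensorMap (depol lam) (depol lam) Pplus)).mulVec v = (μ : ℂ) • v) ∧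
      ¬ IsSep (tensorMap (depol lam) (depol lam) Pplus)) ∧
    (∀ lam : ℝ, 0 ≤ lam → lam ≤ 1 →
      ((∀ ω : Matrix (Fin 2 × Fin 2) (Fin 2 × Fin 2) ℂ, IsState ω →
        IsSep (tensorMap (depol lam) (depol lam) ω)) ↔ lam ≤ (Real.sqrt 3)⁻¹)) := by
  have hpos : ∀ lam : ℝ, (Real.sqrt 3)⁻¹ < lam → 1 < 3 * lam ^ 2 := by
    intro lam h
    have h0 : 0 ≤ lam := le_trans (by positivity) h.le
    by_contra hc
    exact absurd ((le_iff lam h0).2 (not_lt.1 hc)) (not_le.2 h)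
  refine ⟨fun lam h0 h1 ω hω => ppt_of_sep _ (sep_of_le lam ((le_iff lam h0).1 h1) ω hω),
    fun lam h1 _ => ⟨⟨(1 - 3 * lam ^ 2) / 4, singV, ?_, ?_, eig_neg lam⟩, not_sep lam (hpos lam h1)⟩,
    fun lam h0 _ => ⟨fun h => ?_, fun h1 ω hω => sep_of_le lam ((le_iff lam h0).1 h1) ω hω⟩⟩
  · have := hpos lam h1; linarith
  · intro h
    have := congrFun h (0, 1)
    simp [singV] at this
  · by_contra hc
    exact not_sep lam (hpos lam (not_le.1 hc)) (h Pplus Pplus_state)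
end

section
/- Let ω_GHZ = |GHZ⟩⟨GHZ| with |GHZ⟩ = (|000⟩+|111⟩)/√2, and let E_λ be the qubit depolarizing channel. The partial transpose of the three-qubit state E_λ^{⊗3}[ω_GHZ] with respect to the splitting of qubit 1 versus qubits 2,3 has the eigenvalue μ₋ = (1/2)((1−λ²)/4 − λ³), which is negative whenever (1−λ²)/4 < λ³; in particular μ₋ < 0 for λ = 1/√3, so E_{1/√3}^{⊗3}[ω_GHZ] is entangled across the 1|23 cut and hence not fully separable. Consequently the depolarizing channel E_{1/√3} is 2-locally entanglement-annihilating but not 3-locally entanglement-annihilating, i.e., T_{3-LEA} is a strict subset of T_{2-LEA}. -/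
open Matrix
open scoped Kronecker ComplexOrder

/-- Full separability of a three-qubit state: a finite convex combination of
threefold Kronecker products of single-qubit states. -/
def IsFullySep3 (ω : Matrix (Fin 2 × Fin 2 × Fin 2) (Fin 2 × Fin 2 × Fin 2) ℂ) : Prop :=
  ∃ (m : ℕ) (p : Fin m → ℝ) (a b c : Fin m → Matrix (Fin 2) (Fin 2) ℂ),
    (∀ j, 0 ≤ p j) ∧ ((∑ j, p j) = 1) ∧
    (∀ j, IsState (a j) ∧ IsState (b j) ∧ IsState (c j)) ∧
    ω = ∑ j, (p j : ℂ) • (a j ⊗ₖ (b j ⊗ₖ c j))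

/-- A single-qubit channel is 2-locally entanglement-annihilating if `E ⊗ E` maps
every two-qubit state to a separable state. -/
def Is2LEA (E : Matrix (Fin 2) (Fin 2) ℂ → Matrix (Fin 2) (Fin 2) ℂ) : Prop :=
  ∀ ω : Matrix (Fin 2 × Fin 2) (Fin 2 × Fin 2) ℂ, IsState ω →
    IsSep (tensorMap E E ω)

/-- A single-qubit channel is 3-locally entanglement-annihilating if `E ⊗ E ⊗ E` maps
every three-qubit state to a fully separable state. -/
def Is3LEA (E : Matrix (Fin 2) (Fin 2) ℂ → Matrix (Fin 2) (Fin 2) ℂ) : Prop :=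
  ∀ ω : Matrix (Fin 2 × Fin 2 × Fin 2) (Fin 2 × Fin 2 × Fin 2) ℂ, IsState ω →
    IsFullySep3 (tensorMap E (tensorMap E E) ω)


/-! ### A singular value decomposition for two-by-two matrices -/

lemma exists_unit_pair (x y : ℂ) : ∃ (u w : ℂ) (s : ℝ), 0 ≤ s ∧ star u * u + star w * w = 1 ∧
    x = s * u ∧ y = s * w := by
  by_cases h : x = 0 ∧ y = 0
  · exact ⟨1, 0, 0, le_rfl, by simp, by simp [h.1], by simp [h.2]⟩
  · set n : ℝ := Complex.normSq x + Complex.normSq y with hn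
    have hpos : 0 < n := by
      have h1 := Complex.normSq_nonneg x
      have h2 := Complex.normSq_nonneg y
      rcases not_and_or.mp h with h | h
      · have := Complex.normSq_pos.mpr h
        linarith
      · have := Complex.normSq_pos.mpr h
        linarith
    have hs : 0 < √n := Real.sqrt_pos.mpr hpos
    have hsq : ((√n : ℝ) : ℂ) * ((√n : ℝ) : ℂ) = (n : ℂ) := by
      rw [← Complex.ofReal_mul, Real.mul_self_sqrt hpos.le]
    have hs0 : ((√n : ℝ) : ℂ) ≠ 0 := by exact_mod_cast hs.ne'
    refine ⟨x / (√n : ℝ), y / (√n : ℝ), √n, hs.le, ?_, ?_, ?_⟩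
    · have h1 : star x * x = (Complex.normSq x : ℂ) := Complex.normSq_eq_conj_mul_self.symm
      have h2 : star y * y = (Complex.normSq y : ℂ) := Complex.normSq_eq_conj_mul_self.symm
      have hst : star ((√n : ℝ) : ℂ) = ((√n : ℝ) : ℂ) := Complex.conj_ofReal _
      rw [star_div₀, star_div₀, hst]
      have : star x / ((√n : ℝ) : ℂ) * (x / (√n : ℝ)) + star y / ((√n : ℝ) : ℂ) * (y / (√n : ℝ))
          = (star x * x + star y * y) / (((√n : ℝ) : ℂ) * ((√n : ℝ) : ℂ)) := by
        field_simp
      rw [this, hsq, h1, h2, ← Complex.ofReal_add, ← hn]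
      exact div_self (by exact_mod_cast hpos.ne')
    · field_simp
    · field_simp

lemma exists_phase (c : ℂ) : ∃ (z : ℂ) (s : ℝ), 0 ≤ s ∧ star z * z = 1 ∧ c = s * z := by
  by_cases h : c = 0
  · exact ⟨1, 0, le_rfl, by simp, by simp [h]⟩
  · have hn : (‖c‖ : ℂ) ≠ 0 := by simpa using h
    refine ⟨c / ‖c‖, ‖c‖, norm_nonneg _, ?_, by field_simp⟩
    have h1 : star c * c = (‖c‖ : ℂ) ^ 2 := by
      have := Complex.conj_mul' c
      simpa using this
    have hst : star (‖c‖ : ℂ) = (‖c‖ : ℂ) := Complex.conj_ofReal _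
    rw [star_div₀, hst]
    field_simp
    linear_combination h1

lemma exists_orthonormal_columns (N : Matrix (Fin 2) (Fin 2) ℂ)
    (h : star (N 0 0) * N 0 1 + star (N 1 0) * N 1 1 = 0) :
    ∃ (U : Matrix (Fin 2) (Fin 2) ℂ) (s t : ℝ), 0 ≤ s ∧ 0 ≤ t ∧ Uᴴ * U = 1 ∧
      N = U * Matrix.diagonal ![(s : ℂ), (t : ℂ)] := by
  by_cases hx : N 0 0 = 0 ∧ N 1 0 = 0
  · obtain ⟨u, w, t, ht, huw, h1, h2⟩ := exists_unit_pair (N 0 1) (N 1 1)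
    refine ⟨!![-star w, u; star u, w], 0, t, le_rfl, ht, ?_, ?_⟩
    · ext i j
      fin_cases i <;> fin_cases j <;>
        simp [Matrix.mul_apply, Fin.sum_univ_two, Matrix.conjTranspose_apply] <;>
        simp at huw <;> first | ring1 | linear_combination huw
    · ext i j
      fin_cases i <;> fin_cases j <;>
        simp [Matrix.mul_apply, Fin.sum_univ_two, hx.1, hx.2, h1, h2, mul_comm]
  · obtain ⟨u, w, s, hs, huw, h1, h2⟩ := exists_unit_pair (N 0 0) (N 1 0)
    have hs0 : (s : ℂ) ≠ 0 := by
      intro h0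
      exact hx ⟨by rw [h1, h0, zero_mul], by rw [h2, h0, zero_mul]⟩
    have hst : star (s : ℂ) = (s : ℂ) := Complex.conj_ofReal _
    have horth : star u * N 0 1 + star w * N 1 1 = 0 := by
      rw [h1, h2, star_mul', star_mul', hst] at h
      apply mul_left_cancel₀ hs0
      linear_combination h
    obtain ⟨z, t, ht, hz, hc⟩ := exists_phase (u * N 1 1 - w * N 0 1)
    refine ⟨!![u, -star w * z; w, star u * z], s, t, hs, ht, ?_, ?_⟩
    · simp at huw hz
      ext i j
      fin_cases i <;> fin_cases j <;>
        simp [Matrix.mul_apply, Fin.sum_univ_two, Matrix.conjTranspose_apply]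
      · linear_combination huw
      · ring
      · ring
      · linear_combination huw * (starRingEnd ℂ z * z) + hz
    · simp at huw horth
      ext i j
      fin_cases i <;> fin_cases j <;>
        simp [Matrix.mul_apply, Fin.sum_univ_two]
      · rw [h1]; ring
      · linear_combination (-N 0 1) * huw + u * horth - starRingEnd ℂ w * hc
      · rw [h2]; ring
      · linear_combination (-N 1 1) * huw + w * horth + starRingEnd ℂ u * hc

lemma exists_svd (M : Matrix (Fin 2) (Fin 2) ℂ) :
    ∃ (U V : Matrix (Fin 2) (Fin 2) ℂ) (s t : ℝ), 0 ≤ s ∧ 0 ≤ t ∧ Uᴴ * U = 1 ∧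
      V * Vᴴ = 1 ∧ M = U * Matrix.diagonal ![(s : ℂ), (t : ℂ)] * V := by
  have hH : (Mᴴ * M).IsHermitian := Matrix.isHermitian_conjTranspose_mul_self M
  set W : Matrix (Fin 2) (Fin 2) ℂ := (hH.eigenvectorUnitary : Matrix (Fin 2) (Fin 2) ℂ) with hW
  have hWW : Wᴴ * W = 1 := Unitary.coe_star_mul_self hH.eigenvectorUnitary
  have hWW' : W * Wᴴ = 1 := Unitary.coe_mul_star_self hH.eigenvectorUnitary
  have hdiag : Wᴴ * (Mᴴ * M) * W = diagonal (RCLike.ofReal ∘ hH.eigenvalues) := by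
    have := hH.conjStarAlgAut_star_eigenvectorUnitary
    rw [Unitary.conjStarAlgAut_star_apply] at this
    exact this
  have horth : star ((M * W) 0 0) * (M * W) 0 1 + star ((M * W) 1 0) * (M * W) 1 1 = 0 := by
    have h1 : ((M * W)ᴴ * (M * W)) 0 1 = 0 := by
      rw [Matrix.conjTranspose_mul]
      have : Wᴴ * Mᴴ * (M * W) = Wᴴ * (Mᴴ * M) * W := by simp only [Matrix.mul_assoc]
      rw [this, hdiag]
      simp
    rw [Matrix.mul_apply, Fin.sum_univ_two, Matrix.conjTranspose_apply,
      Matrix.conjTranspose_apply] at h1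
    exact h1
  obtain ⟨U, s, t, hs, ht, hU, hN⟩ := exists_orthonormal_columns (M * W) horth
  refine ⟨U, Wᴴ, s, t, hs, ht, hU, by simpa using hWW, ?_⟩
  rw [← hN, Matrix.mul_assoc, hWW', Matrix.mul_one]

/-! ### The cone of (unnormalised) separable matrices -/

/-- The cone generated by Kronecker products of positive semidefinite matrices. -/
def sepCone (ιA ιB : Type) [Fintype ιA] [Fintype ιB] :
    AddSubmonoid (Matrix (ιA × ιB) (ιA × ιB) ℂ) :=
  AddSubmonoid.closure {X | ∃ (A : Matrix ιA ιA ℂ) (B : Matrix ιB ιB ℂ),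
    A.PosSemidef ∧ B.PosSemidef ∧ X = A ⊗ₖ B}

lemma kron_mem_sepCone {ιA ιB : Type} [Fintype ιA] [Fintype ιB]
    {A : Matrix ιA ιA ℂ} {B : Matrix ιB ιB ℂ} (hA : A.PosSemidef) (hB : B.PosSemidef) :
    A ⊗ₖ B ∈ sepCone ιA ιB :=
  AddSubmonoid.subset_closure ⟨A, B, hA, hB, rfl⟩

lemma real_smul_posSemidef {ι : Type} [Fintype ι] {A : Matrix ι ι ℂ} (hA : A.PosSemidef)
    {c : ℝ} (hc : 0 ≤ c) : ((c : ℂ) • A).PosSemidef :=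
  hA.smul (by exact_mod_cast hc)

lemma smul_kron_mem_sepCone {ιA ιB : Type} [Fintype ιA] [Fintype ιB]
    {A : Matrix ιA ιA ℂ} {B : Matrix ιB ιB ℂ} (hA : A.PosSemidef) (hB : B.PosSemidef)
    {c : ℝ} (hc : 0 ≤ c) : (c : ℂ) • (A ⊗ₖ B) ∈ sepCone ιA ιB := by
  rw [← Matrix.smul_kronecker]
  exact kron_mem_sepCone (real_smul_posSemidef hA hc) hB

/-- Every positive semidefinite matrix is a nonnegative multiple of a state. -/
lemma exists_state {ι : Type} [Fintype ι] {ρ₀ : Matrix ι ι ℂ} (h₀ : IsState ρ₀)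
    {A : Matrix ι ι ℂ} (hA : A.PosSemidef) :
    ∃ (c : ℝ) (ξ : Matrix ι ι ℂ), 0 ≤ c ∧ IsState ξ ∧ A = (c : ℂ) • ξ := by
  have htr := hA.trace_nonneg
  obtain ⟨h1, h2⟩ := Complex.le_def.mp htr
  have htr' : A.trace = (A.trace.re : ℂ) := Complex.ext rfl (by simpa using h2.symm)
  by_cases h : A.trace.re = 0
  · refine ⟨0, ρ₀, le_rfl, h₀, ?_⟩
    rw [hA.trace_eq_zero_iff.mp (by rw [htr', h]; simp)]
    simp
  · have hc : (A.trace.re : ℂ) ≠ 0 := by exact_mod_cast h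
    refine ⟨A.trace.re, ((A.trace.re⁻¹ : ℝ) : ℂ) • A, h1,
      ⟨real_smul_posSemidef hA (inv_nonneg.mpr h1), ?_⟩, ?_⟩
    · rw [Matrix.trace_smul, htr', Complex.ofReal_inv, smul_eq_mul]
      simpa using inv_mul_cancel₀ hc
    · rw [smul_smul, Complex.ofReal_inv, mul_inv_cancel₀ hc, one_smul]

lemma isSep_of_mem_sepCone {ιA ιB : Type} [Fintype ιA] [Fintype ιB]
    {ρA : Matrix ιA ιA ℂ} {ρB : Matrix ιB ιB ℂ} (hA : IsState ρA) (hB : IsState ρB)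
    {X : Matrix (ιA × ιB) (ιA × ιB) ℂ} (hX : X ∈ sepCone ιA ιB) (htr : X.trace = 1) :
    IsSep X := by
  have key : ∃ (m : ℕ) (p : Fin m → ℝ) (ξ : Fin m → Matrix ιA ιA ℂ)
      (ζ : Fin m → Matrix ιB ιB ℂ),
      (∀ j, 0 ≤ p j) ∧ (∀ j, IsState (ξ j)) ∧ (∀ j, IsState (ζ j)) ∧
      X = ∑ j, (p j : ℂ) • (ξ j ⊗ₖ ζ j) := by
    clear htr
    induction hX using AddSubmonoid.closure_induction with
    | mem X hX =>
      obtain ⟨A, B, hA', hB', rfl⟩ := hX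
      obtain ⟨c, ξ, hc, hξ, rfl⟩ := exists_state hA hA'
      obtain ⟨d, ζ, hd, hζ, rfl⟩ := exists_state hB hB'
      refine ⟨1, fun _ => c * d, fun _ => ξ, fun _ => ζ, fun _ => mul_nonneg hc hd,
        fun _ => hξ, fun _ => hζ, ?_⟩
      rw [Matrix.smul_kronecker, Matrix.kronecker_smul, smul_smul, Fin.sum_univ_one,
        Complex.ofReal_mul]
    | zero => exact ⟨0, Fin.elim0, Fin.elim0, Fin.elim0, fun j => j.elim0, fun j => j.elim0,
        fun j => j.elim0, by simp⟩
    | add X Y _ _ hX hY =>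
      obtain ⟨m, p, ξ, ζ, hp, hξ, hζ, rfl⟩ := hX
      obtain ⟨n, q, ξ', ζ', hq, hξ', hζ', rfl⟩ := hY
      refine ⟨m + n, Fin.append p q, Fin.append ξ ξ', Fin.append ζ ζ', ?_, ?_, ?_, ?_⟩
      · intro j
        refine Fin.addCases (fun i => ?_) (fun i => ?_) j
        · simpa using hp i
        · simpa using hq i
      · intro j
        refine Fin.addCases (fun i => ?_) (fun i => ?_) j
        · simpa using hξ i
        · simpa using hξ' i
      · intro j
        refine Fin.addCases (fun i => ?_) (fun i => ?_) j
        · simpa using hζ i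
        · simpa using hζ' i
      · rw [Fin.sum_univ_add]
        simp
  obtain ⟨m, p, ξ, ζ, hp, hξ, hζ, rfl⟩ := key
  refine ⟨m, p, ξ, ζ, hp, ?_, hξ, hζ, rfl⟩
  rw [Matrix.trace_sum] at htr
  simp only [Matrix.trace_smul, Matrix.trace_kronecker, (hξ _).2, (hζ _).2, smul_eq_mul,
    mul_one] at htr
  exact_mod_cast htr

/-! ### Linearity and local maps -/

/-- Linearity, in the form used in `IsChannel`. -/
def LinMap {ι : Type} (E : Matrix ι ι ℂ → Matrix ι ι ℂ) : Prop :=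
  ∀ (c : ℂ) (X Y : Matrix ι ι ℂ), E (c • X + Y) = c • E X + E Y

lemma LinMap.map_zero {ι : Type} {E : Matrix ι ι ℂ → Matrix ι ι ℂ} (h : LinMap E) :
    E 0 = 0 := by
  have := h 1 0 0
  simpa using this

lemma LinMap.map_smul {ι : Type} {E : Matrix ι ι ℂ → Matrix ι ι ℂ} (h : LinMap E)
    (c : ℂ) (X : Matrix ι ι ℂ) : E (c • X) = c • E X := by
  have := h c X 0
  simpa [h.map_zero] using this

lemma LinMap.map_add {ι : Type} {E : Matrix ι ι ℂ → Matrix ι ι ℂ} (h : LinMap E)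
    (X Y : Matrix ι ι ℂ) : E (X + Y) = E X + E Y := by
  have := h 1 X Y
  simpa using this

lemma LinMap.map_sum {ι κ : Type} {E : Matrix ι ι ℂ → Matrix ι ι ℂ} (h : LinMap E)
    (s : Finset κ) (f : κ → Matrix ι ι ℂ) : E (∑ k ∈ s, f k) = ∑ k ∈ s, E (f k) := by
  classical
  induction s using Finset.induction_on with
  | empty => simpa using h.map_zero
  | insert a s ha ih => rw [Finset.sum_insert ha, Finset.sum_insert ha, h.map_add, ih]

lemma LinMap.tensorMap {ιA ιB : Type} {E : Matrix ιA ιA ℂ → Matrix ιA ιA ℂ}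
    {F : Matrix ιB ιB ℂ → Matrix ιB ιB ℂ} (hE : LinMap E) (hF : LinMap F) :
    LinMap (tensorMap E F) := by
  intro c X Y
  have h1 : rTensor E (c • X + Y) = c • rTensor E X + rTensor E Y := by
    ext p q
    have := congrFun (congrFun (hE c (Matrix.of fun a d => X (a, p.2) (d, q.2))
      (Matrix.of fun a d => Y (a, p.2) (d, q.2))) p.1) q.1
    exact this
  have h2 : ∀ X Y : Matrix (ιA × ιB) (ιA × ιB) ℂ,
      lTensor F (c • X + Y) = c • lTensor F X + lTensor F Y := by
    intro X Y
    ext p q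
    have := congrFun (congrFun (hF c (Matrix.of fun b d => X (p.1, b) (q.1, d))
      (Matrix.of fun b d => Y (p.1, b) (q.1, d))) p.2) q.2
    exact this
  unfold _root_.tensorMap
  rw [h1, h2]

lemma tensorMap_kronecker {ιA ιB : Type} {E : Matrix ιA ιA ℂ → Matrix ιA ιA ℂ}
    {F : Matrix ιB ιB ℂ → Matrix ιB ιB ℂ} (hE : LinMap E) (hF : LinMap F)
    (A : Matrix ιA ιA ℂ) (B : Matrix ιB ιB ℂ) : tensorMap E F (A ⊗ₖ B) = E A ⊗ₖ F B := by
  have h1 : rTensor E (A ⊗ₖ B) = E A ⊗ₖ B := by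
    ext p q
    have h : (Matrix.of fun a c => (A ⊗ₖ B) (a, p.2) (c, q.2)) = B p.2 q.2 • A := by
      ext a c
      simp [Matrix.kroneckerMap_apply, mul_comm]
    simp only [rTensor, Matrix.of_apply]
    rw [h, hE.map_smul]
    simp [Matrix.kroneckerMap_apply, mul_comm]
  unfold tensorMap
  rw [h1]
  ext p q
  have h : (Matrix.of fun b d => (E A ⊗ₖ B) (p.1, b) (q.1, d)) = E A p.1 q.1 • B := by
    ext a c
    simp [Matrix.kroneckerMap_apply]
  simp only [lTensor, Matrix.of_apply]
  rw [h, hF.map_smul]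
  simp [Matrix.kroneckerMap_apply]

lemma depol_linMap (lam : ℝ) : LinMap (depol lam) := by
  intro c X Y
  ext i j
  simp [depol, Matrix.trace_add, Matrix.trace_smul]
  ring

lemma depol_trace (lam : ℝ) (X : Matrix (Fin 2) (Fin 2) ℂ) : (depol lam X).trace = X.trace := by
  simp [depol, Matrix.trace_fin_two]
  ring

/-- A tensor product of linear trace-preserving maps is trace preserving. -/
lemma tensorMap_trace {ιA ιB : Type} [Fintype ιA] [Fintype ιB]
    {E : Matrix ιA ιA ℂ → Matrix ιA ιA ℂ} {F : Matrix ιB ιB ℂ → Matrix ιB ιB ℂ}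
    (hE : ∀ X, (E X).trace = X.trace) (hF : ∀ X, (F X).trace = X.trace)
    (X : Matrix (ιA × ιB) (ιA × ιB) ℂ) : (tensorMap E F X).trace = X.trace := by
  have h2 : ∀ Y : Matrix (ιA × ιB) (ιA × ιB) ℂ, (lTensor F Y).trace = Y.trace := by
    intro Y
    simp only [Matrix.trace, Matrix.diag_apply, Fintype.sum_prod_type]
    refine Finset.sum_congr rfl fun a _ => ?_
    exact hF (Matrix.of fun b d => Y (a, b) (a, d))
  have h1 : (rTensor E X).trace = X.trace := by
    simp only [Matrix.trace, Matrix.diag_apply, Fintype.sum_prod_type_right]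
    refine Finset.sum_congr rfl fun b _ => ?_
    exact hE (Matrix.of fun a c => X (a, b) (c, b))
  rw [tensorMap, h2, h1]

/-! ### The depolarizing channel with `lam ^ 2 = 1 / 3` is 2-LEA -/

lemma depol_of_trace {lam : ℝ} {X : Matrix (Fin 2) (Fin 2) ℂ} {t : ℂ} (h : X.trace = t) :
    depol lam X = (lam : ℂ) • X + ((1 - lam : ℂ) * t / 2) • (1 : Matrix (Fin 2) (Fin 2) ℂ) := by
  rw [depol, h, smul_smul, smul_smul]
  congr 2
  push_cast
  ring

/-- The averaging identity: the image of a pure state, in its Schmidt basis, is a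
combination of product matrices. -/
lemma schmidt_identity (lam a b : ℂ) (K00 K01 K10 K11 L00 L01 L10 L11 :
      Matrix (Fin 2) (Fin 2) ℂ) (G H : ℂ → ℂ → Matrix (Fin 2) (Fin 2) ℂ)
    (hG : ∀ z w, G z w = a ^ 2 • K00 + b ^ 2 • K11 + (a * b) • (z • K10 + w • K01))
    (hH : ∀ z w, H z w = a ^ 2 • L00 + b ^ 2 • L11 + (a * b) • (w • L10 + z • L01)) :
    (a ^ 4) • ((lam • K00 + ((1 - lam) / 2) • (K00 + K11)) ⊗ₖ
        (lam • L00 + ((1 - lam) / 2) • (L00 + L11)))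
      + (b ^ 4) • ((lam • K11 + ((1 - lam) / 2) • (K00 + K11)) ⊗ₖ
        (lam • L11 + ((1 - lam) / 2) • (L00 + L11)))
      + (a ^ 2 * b ^ 2) • ((lam • K01) ⊗ₖ (lam • L01))
      + (a ^ 2 * b ^ 2) • ((lam • K10) ⊗ₖ (lam • L10))
    = (lam ^ 2 / 4) • (G 1 1 ⊗ₖ H 1 1) + (lam ^ 2 / 4) • (G (-1) (-1) ⊗ₖ H (-1) (-1))
      + (lam ^ 2 / 4) • (G Complex.I (-Complex.I) ⊗ₖ H Complex.I (-Complex.I))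
      + (lam ^ 2 / 4) • (G (-Complex.I) Complex.I ⊗ₖ H (-Complex.I) Complex.I)
      + (lam * (1 - lam) * a ^ 4 + (1 - lam) ^ 2 / 4 * (a ^ 4 + b ^ 4)) • (K00 ⊗ₖ L00)
      + (lam * (1 - lam) * b ^ 4 + (1 - lam) ^ 2 / 4 * (a ^ 4 + b ^ 4)) • (K11 ⊗ₖ L11)
      + ((1 - lam ^ 2) / 4 * (a ^ 4 + b ^ 4) - lam ^ 2 * (a ^ 2 * b ^ 2)) • (K00 ⊗ₖ L11)
      + ((1 - lam ^ 2) / 4 * (a ^ 4 + b ^ 4) - lam ^ 2 * (a ^ 2 * b ^ 2)) • (K11 ⊗ₖ L00) := by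
  ext ⟨i, j⟩ ⟨k, l⟩
  simp only [hG, hH, Matrix.add_apply, Matrix.smul_apply, Matrix.kroneckerMap_apply, smul_eq_mul]
  ring_nf
  simp only [Complex.I_sq]
  ring

lemma depol_pure_mem_sepCone {lam : ℝ} (h0 : 0 ≤ lam) (h1 : lam ≤ 1) (h3 : lam ^ 2 ≤ 1 / 3)
    (ψ : Fin 2 × Fin 2 → ℂ) :
    tensorMap (depol lam) (depol lam) (Matrix.vecMulVec ψ (star ψ)) ∈
      sepCone (Fin 2) (Fin 2) := by
  obtain ⟨U, V, s, t, hs, ht, hU, hV, hM⟩ := exists_svd (Matrix.of fun i j => ψ (i, j))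
  have hU' : U * Uᴴ = 1 := mul_eq_one_comm.mp hU
  have hV' : Vᴴ * V = 1 := mul_eq_one_comm.mp hV
  set a : ℝ := √s with ha
  set b : ℝ := √t with hb
  have has : (s : ℂ) = (a : ℂ) ^ 2 := by
    rw [← Complex.ofReal_pow, Real.sq_sqrt hs]
  have hbt : (t : ℂ) = (b : ℂ) ^ 2 := by
    rw [← Complex.ofReal_pow, Real.sq_sqrt ht]
  let u : Fin 2 → Fin 2 → ℂ := fun k i => U i k
  let v : Fin 2 → Fin 2 → ℂ := fun k j => V k j
  let K : Fin 2 → Fin 2 → Matrix (Fin 2) (Fin 2) ℂ := fun k l => vecMulVec (u k) (star (u l))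
  let L : Fin 2 → Fin 2 → Matrix (Fin 2) (Fin 2) ℂ := fun k l => vecMulVec (v k) (star (v l))
  have hKtr : ∀ k l, (K k l).trace = (1 : Matrix (Fin 2) (Fin 2) ℂ) l k := by
    intro k l
    rw [← hU, Matrix.mul_apply, Matrix.trace]
    refine Finset.sum_congr rfl fun i _ => ?_
    simp [K, u, Matrix.vecMulVec_apply, mul_comm]
  have hLtr : ∀ k l, (L k l).trace = (1 : Matrix (Fin 2) (Fin 2) ℂ) k l := by
    intro k l
    rw [← hV, Matrix.mul_apply, Matrix.trace]
    refine Finset.sum_congr rfl fun i _ => ?_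
    simp [L, v, Matrix.vecMulVec_apply]
  have hK1 : (1 : Matrix (Fin 2) (Fin 2) ℂ) = K 0 0 + K 1 1 := by
    rw [← hU']
    ext i j
    simp [K, u, Matrix.vecMulVec_apply, Matrix.mul_apply, Fin.sum_univ_two]
  have hL1 : (1 : Matrix (Fin 2) (Fin 2) ℂ) = L 0 0 + L 1 1 := by
    rw [← Matrix.transpose_one, ← hV', Matrix.transpose_mul]
    ext i j
    simp [L, v, Matrix.vecMulVec_apply, Matrix.mul_apply, Fin.sum_univ_two]
  have hψ : ∀ i j, ψ (i, j) = (a : ℂ) ^ 2 * (u 0 i * v 0 j) + (b : ℂ) ^ 2 * (u 1 i * v 1 j) := by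
    intro i j
    have := congrFun (congrFun hM i) j
    simp only [Matrix.of_apply] at this
    rw [this, Matrix.mul_apply, Fin.sum_univ_two, Matrix.mul_diagonal, Matrix.mul_diagonal]
    simp only [Matrix.cons_val_zero, Matrix.cons_val_one, has, hbt, u, v]
    ring
  have hexp : Matrix.vecMulVec ψ (star ψ) = ((a : ℂ) ^ 4) • (K 0 0 ⊗ₖ L 0 0)
      + ((b : ℂ) ^ 4) • (K 1 1 ⊗ₖ L 1 1) + ((a : ℂ) ^ 2 * (b : ℂ) ^ 2) • (K 0 1 ⊗ₖ L 0 1)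
      + ((a : ℂ) ^ 2 * (b : ℂ) ^ 2) • (K 1 0 ⊗ₖ L 1 0) := by
    ext ⟨i, j⟩ ⟨k, l⟩
    simp [K, L, Matrix.vecMulVec_apply, hψ, Matrix.kroneckerMap_apply]
    ring
  have hE : LinMap (tensorMap (depol lam) (depol lam)) :=
    (depol_linMap lam).tensorMap (depol_linMap lam)
  have d00 : depol lam (K 0 0) = (lam : ℂ) • K 0 0 + ((1 - lam : ℂ) / 2) • (K 0 0 + K 1 1) := by
    rw [depol_of_trace (hKtr 0 0), ← hK1]; simp
  have d11 : depol lam (K 1 1) = (lam : ℂ) • K 1 1 + ((1 - lam : ℂ) / 2) • (K 0 0 + K 1 1) := by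
    rw [depol_of_trace (hKtr 1 1), ← hK1]; simp
  have d01 : depol lam (K 0 1) = (lam : ℂ) • K 0 1 := by
    rw [depol_of_trace (hKtr 0 1)]; simp
  have d10 : depol lam (K 1 0) = (lam : ℂ) • K 1 0 := by
    rw [depol_of_trace (hKtr 1 0)]; simp
  have e00 : depol lam (L 0 0) = (lam : ℂ) • L 0 0 + ((1 - lam : ℂ) / 2) • (L 0 0 + L 1 1) := by
    rw [depol_of_trace (hLtr 0 0), ← hL1]; simp
  have e11 : depol lam (L 1 1) = (lam : ℂ) • L 1 1 + ((1 - lam : ℂ) / 2) • (L 0 0 + L 1 1) := by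
    rw [depol_of_trace (hLtr 1 1), ← hL1]; simp
  have e01 : depol lam (L 0 1) = (lam : ℂ) • L 0 1 := by
    rw [depol_of_trace (hLtr 0 1)]; simp
  have e10 : depol lam (L 1 0) = (lam : ℂ) • L 1 0 := by
    rw [depol_of_trace (hLtr 1 0)]; simp
  let G : ℂ → ℂ → Matrix (Fin 2) (Fin 2) ℂ := fun z w =>
    (a : ℂ) ^ 2 • K 0 0 + (b : ℂ) ^ 2 • K 1 1 + ((a : ℂ) * b) • (z • K 1 0 + w • K 0 1)
  let H : ℂ → ℂ → Matrix (Fin 2) (Fin 2) ℂ := fun z w =>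
    (a : ℂ) ^ 2 • L 0 0 + (b : ℂ) ^ 2 • L 1 1 + ((a : ℂ) * b) • (w • L 1 0 + z • L 0 1)
  have hGpos : ∀ z w : ℂ, w = star z → z * w = 1 → (G z w).PosSemidef := by
    rintro z _ rfl hz
    have : G z (star z) = vecMulVec (fun i => (a : ℂ) * u 0 i + b * z * u 1 i)
        (star (fun i => (a : ℂ) * u 0 i + b * z * u 1 i)) := by
      ext i j
      simp [G, K, Matrix.vecMulVec_apply]
      simp at hz
      linear_combination (-(b : ℂ) ^ 2 * u 1 i * starRingEnd ℂ (u 1 j)) * hz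
    rw [this]
    exact posSemidef_vecMulVec_self_star _
  have hHpos : ∀ z w : ℂ, w = star z → z * w = 1 → (H z w).PosSemidef := by
    rintro z _ rfl hz
    have : H z (star z) = vecMulVec (fun i => (a : ℂ) * v 0 i + b * star z * v 1 i)
        (star (fun i => (a : ℂ) * v 0 i + b * star z * v 1 i)) := by
      ext i j
      simp [H, L, Matrix.vecMulVec_apply]
      simp at hz
      linear_combination (-(b : ℂ) ^ 2 * v 1 i * starRingEnd ℂ (v 1 j)) * hz
    rw [this]
    exact posSemidef_vecMulVec_self_star _
  have hKpos : ∀ k, (K k k).PosSemidef := fun k => posSemidef_vecMulVec_self_star _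
  have hLpos : ∀ k, (L k k).PosSemidef := fun k => posSemidef_vecMulVec_self_star _
  rw [hexp, hE.map_add, hE.map_add, hE.map_add, hE.map_smul, hE.map_smul, hE.map_smul,
    hE.map_smul]
  simp only [tensorMap_kronecker (depol_linMap lam) (depol_linMap lam)]
  rw [d00, d11, d01, d10, e00, e11, e01, e10,
    schmidt_identity lam a b (K 0 0) (K 0 1) (K 1 0) (K 1 1) (L 0 0) (L 0 1) (L 1 0) (L 1 1) G H
      (fun _ _ => rfl) (fun _ _ => rfl)]
  have hc1 : ((lam : ℂ) ^ 2 / 4) = ((lam ^ 2 / 4 : ℝ) : ℂ) := by push_cast; ring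
  have hc2 : ((lam : ℂ) * (1 - lam) * a ^ 4 + (1 - lam) ^ 2 / 4 * (a ^ 4 + b ^ 4))
      = ((lam * (1 - lam) * a ^ 4 + (1 - lam) ^ 2 / 4 * (a ^ 4 + b ^ 4) : ℝ) : ℂ) := by
    push_cast; ring
  have hc3 : ((lam : ℂ) * (1 - lam) * b ^ 4 + (1 - lam) ^ 2 / 4 * (a ^ 4 + b ^ 4))
      = ((lam * (1 - lam) * b ^ 4 + (1 - lam) ^ 2 / 4 * (a ^ 4 + b ^ 4) : ℝ) : ℂ) := by
    push_cast; ring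
  have hc4 : ((1 - (lam : ℂ) ^ 2) / 4 * (a ^ 4 + b ^ 4) - lam ^ 2 * (a ^ 2 * b ^ 2))
      = (((1 - lam ^ 2) / 4 * (a ^ 4 + b ^ 4) - lam ^ 2 * (a ^ 2 * b ^ 2) : ℝ) : ℂ) := by
    push_cast; ring
  have p1 : 0 ≤ lam ^ 2 / 4 := by positivity
  have hl : 0 ≤ 1 - lam := by linarith
  have p2 : 0 ≤ lam * (1 - lam) * a ^ 4 + (1 - lam) ^ 2 / 4 * (a ^ 4 + b ^ 4) := by positivity
  have p3 : 0 ≤ lam * (1 - lam) * b ^ 4 + (1 - lam) ^ 2 / 4 * (a ^ 4 + b ^ 4) := by positivity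
  have p4 : 0 ≤ (1 - lam ^ 2) / 4 * (a ^ 4 + b ^ 4) - lam ^ 2 * (a ^ 2 * b ^ 2) := by
    have q1 : 0 ≤ (1 / 3 - lam ^ 2) * (a ^ 2 * b ^ 2) :=
      mul_nonneg (by linarith) (by positivity)
    have q2 : 0 ≤ (1 / 3 - lam ^ 2) * (a ^ 4 + b ^ 4) :=
      mul_nonneg (by linarith) (by positivity)
    nlinarith [sq_nonneg (a ^ 2 - b ^ 2)]
  rw [hc1, hc2, hc3, hc4]
  have z1 : (1 : ℂ) = star 1 := by simp
  have z2 : (-1 : ℂ) = star (-1) := by simp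
  have z3 : (-Complex.I : ℂ) = star Complex.I := by simp
  have z4 : (Complex.I : ℂ) = star (-Complex.I) := by simp
  refine add_mem (add_mem (add_mem (add_mem (add_mem (add_mem (add_mem ?_ ?_) ?_) ?_) ?_) ?_) ?_) ?_
  · exact smul_kron_mem_sepCone (hGpos _ _ z1 (by simp)) (hHpos _ _ z1 (by simp)) p1
  · exact smul_kron_mem_sepCone (hGpos _ _ z2 (by simp)) (hHpos _ _ z2 (by simp)) p1
  · exact smul_kron_mem_sepCone (hGpos _ _ z3 (by simp)) (hHpos _ _ z3 (by simp)) p1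
  · exact smul_kron_mem_sepCone (hGpos _ _ z4 (by simp)) (hHpos _ _ z4 (by simp)) p1
  · exact smul_kron_mem_sepCone (hKpos 0) (hLpos 0) p2
  · exact smul_kron_mem_sepCone (hKpos 1) (hLpos 1) p3
  · exact smul_kron_mem_sepCone (hKpos 0) (hLpos 1) p4
  · exact smul_kron_mem_sepCone (hKpos 1) (hLpos 0) p4

/-- The pure state `|0⟩⟨0|`. -/
def zeroState : Matrix (Fin 2) (Fin 2) ℂ := vecMulVec ![1, 0] (star ![1, 0])

lemma zeroState_isState : IsState zeroState :=
  ⟨posSemidef_vecMulVec_self_star _, by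
    rw [Matrix.trace_fin_two]
    simp [zeroState, Matrix.vecMulVec_apply]⟩

lemma posSemidef_eq_sum_pure {ι : Type} [Fintype ι] [DecidableEq ι] {X : Matrix ι ι ℂ}
    (hX : X.PosSemidef) : ∃ ψ : ι → ι → ℂ, X = ∑ k, vecMulVec (ψ k) (star (ψ k)) := by
  let lamb := hX.1.eigenvalues
  let W : Matrix ι ι ℂ := hX.1.eigenvectorUnitary
  refine ⟨fun k i => ((√(lamb k) : ℝ) : ℂ) * W i k, ?_⟩
  have h := hX.1.spectral_theorem
  rw [Unitary.conjStarAlgAut_apply] at h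
  conv_lhs => rw [h]
  ext i j
  rw [Matrix.mul_apply, Matrix.sum_apply]
  refine Finset.sum_congr rfl fun k _ => ?_
  have hk : ((√(lamb k) : ℝ) : ℂ) * ((√(lamb k) : ℝ) : ℂ) = (lamb k : ℂ) := by
    rw [← Complex.ofReal_mul, Real.mul_self_sqrt (hX.eigenvalues_nonneg k)]
  rw [Matrix.mul_diagonal]
  simp only [Matrix.vecMulVec_apply, Pi.star_apply, star_mul', Function.comp_apply,
    Matrix.star_apply]
  have hst : star ((√(lamb k) : ℝ) : ℂ) = ((√(lamb k) : ℝ) : ℂ) := Complex.conj_ofReal _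
  rw [hst]
  change W i k * (lamb k : ℂ) * star (W j k) = _
  linear_combination (-(W i k * star (W j k))) * hk

lemma depol_is2LEA {lam : ℝ} (h0 : 0 ≤ lam) (h1 : lam ≤ 1) (h3 : lam ^ 2 ≤ 1 / 3) :
    Is2LEA (depol lam) := by
  intro ω hω
  refine isSep_of_mem_sepCone zeroState_isState zeroState_isState ?_ ?_
  · obtain ⟨ψ, hψ⟩ := posSemidef_eq_sum_pure hω.1
    rw [hψ, ((depol_linMap lam).tensorMap (depol_linMap lam)).map_sum]
    exact sum_mem fun k _ => depol_pure_mem_sepCone h0 h1 h3 (ψ k)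
  · rw [tensorMap_trace (depol_trace lam) (depol_trace lam), hω.2]

/-! ### The depolarizing map is a channel -/

lemma depol_isChannel {lam : ℝ} (h0 : 0 ≤ lam) (h1 : lam ≤ 1) : IsChannel (depol lam) := by
  refine ⟨depol_linMap lam, depol_trace lam, fun n X hX => ?_⟩
  have hB : ∀ a : Fin 2, (X.submatrix (fun i : Fin n => (a, i)) (fun i => (a, i))).PosSemidef :=
    fun a => hX.submatrix _
  have : tensorId (depol lam) n X = (lam : ℂ) • X + (((1 - lam) / 2 : ℝ) : ℂ) •
      ((1 : Matrix (Fin 2) (Fin 2) ℂ) ⊗ₖ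
        (X.submatrix (fun i : Fin n => ((0 : Fin 2), i)) (fun i => (0, i)) +
          X.submatrix (fun i : Fin n => ((1 : Fin 2), i)) (fun i => (1, i)))) := by
    ext ⟨i, k⟩ ⟨j, l⟩
    simp [tensorId, depol, Matrix.trace_fin_two, Matrix.kroneckerMap_apply]
    ring
  rw [this]
  exact (real_smul_posSemidef hX h0).add (real_smul_posSemidef
    (Matrix.PosSemidef.one.kronecker ((hB 0).add (hB 1))) (by linarith))

/-! ### Three qubits -/

lemma isSep_of_isFullySep3 {ω : Matrix (Fin 2 × Fin 2 × Fin 2) (Fin 2 × Fin 2 × Fin 2) ℂ}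
    (h : IsFullySep3 ω) : IsSep ω := by
  obtain ⟨m, p, a, b, c, hp, hsum, hst, rfl⟩ := h
  refine ⟨m, p, a, fun j => b j ⊗ₖ c j, hp, hsum, fun j => (hst j).1, fun j => ⟨?_, ?_⟩, rfl⟩
  · exact (hst j).2.1.1.kronecker (hst j).2.2.1
  · rw [Matrix.trace_kronecker, (hst j).2.1.2, (hst j).2.2.2, one_mul]

/-- The partial transpose of a separable matrix is positive semidefinite. -/
lemma pt1_posSemidef {ω : Matrix (Fin 2 × Fin 2 × Fin 2) (Fin 2 × Fin 2 × Fin 2) ℂ}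
    (h : IsSep ω) : (pt1 ω).PosSemidef := by
  obtain ⟨m, p, ξ, ζ, hp, -, hξ, hζ, rfl⟩ := h
  have : pt1 (∑ j, (p j : ℂ) • (ξ j ⊗ₖ ζ j)) = ∑ j, (p j : ℂ) • ((ξ j)ᵀ ⊗ₖ ζ j) := by
    ext i k
    simp [pt1, Matrix.sum_apply, Matrix.kroneckerMap_apply]
  rw [this]
  exact Matrix.posSemidef_sum _ fun j _ =>
    real_smul_posSemidef ((hξ j).1.transpose.kronecker (hζ j).1) (hp j)

lemma not_isSep_of_neg_eigenvalue
    {ω : Matrix (Fin 2 × Fin 2 × Fin 2) (Fin 2 × Fin 2 × Fin 2) ℂ} {μ : ℝ} (hμ : μ < 0)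
    (h : ∃ v : (Fin 2 × Fin 2 × Fin 2) → ℂ, v ≠ 0 ∧ (pt1 ω).mulVec v = (μ : ℂ) • v) :
    ¬ IsSep ω := by
  intro hs
  obtain ⟨v, hv, he⟩ := h
  have h1 := (pt1_posSemidef hs).dotProduct_mulVec_nonneg v
  rw [he, dotProduct_smul, smul_eq_mul] at h1
  have h2 : 0 < star v ⬝ᵥ v := dotProduct_star_self_pos_iff.mpr hv
  have h3 : (μ : ℂ) < 0 := by exact_mod_cast hμ
  exact absurd h1 (not_le_of_gt (mul_neg_of_neg_of_pos h3 h2))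

lemma inv_sqrt_two_mul_self : (((√2 : ℝ) : ℂ))⁻¹ * (((√2 : ℝ) : ℂ))⁻¹ = 1 / 2 := by
  rw [← mul_inv, ← Complex.ofReal_mul, Real.mul_self_sqrt (by norm_num)]
  norm_num

lemma ghzState_apply (p q : Fin 2 × Fin 2 × Fin 2) : ghzState p q =
    if (p.1 = p.2.1 ∧ p.2.1 = p.2.2) ∧ (q.1 = q.2.1 ∧ q.2.1 = q.2.2) then 1 / 2 else 0 := by
  have hst : star (((√2 : ℝ) : ℂ))⁻¹ = (((√2 : ℝ) : ℂ))⁻¹ := by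
    rw [← Complex.ofReal_inv]; exact Complex.conj_ofReal _
  simp only [ghzState, Matrix.vecMulVec_apply, ghzVec, Pi.star_apply]
  by_cases h1 : p.1 = p.2.1 ∧ p.2.1 = p.2.2
  · by_cases h2 : q.1 = q.2.1 ∧ q.2.1 = q.2.2
    · rw [if_pos h1, if_pos h2, if_pos ⟨h1, h2⟩, hst, inv_sqrt_two_mul_self]
    · simp [h2]
  · simp [h1]

lemma ghzState_isState : IsState ghzState := by
  refine ⟨posSemidef_vecMulVec_self_star _, ?_⟩
  simp only [Matrix.trace, Matrix.diag_apply, ghzState_apply, Fintype.sum_prod_type,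
    Fin.sum_univ_two]
  norm_num

lemma ghzState_eq : ghzState = ∑ k : Fin 2, ∑ l : Fin 2, (1 / 2 : ℂ) •
    (Matrix.single k l (1 : ℂ) ⊗ₖ (Matrix.single k l (1 : ℂ) ⊗ₖ Matrix.single k l (1 : ℂ))) := by
  ext ⟨i, j, k⟩ ⟨i', j', k'⟩
  simp only [ghzState_apply, Fin.sum_univ_two, Matrix.add_apply, Matrix.smul_apply,
    Matrix.kroneckerMap_apply, Matrix.single_apply, smul_eq_mul]
  fin_cases i <;> fin_cases j <;> fin_cases k <;> fin_cases i' <;> fin_cases j' <;>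
    fin_cases k' <;> simp

lemma depol_ghz (lam : ℝ) : tensorMap (depol lam) (tensorMap (depol lam) (depol lam)) ghzState =
    ∑ k : Fin 2, ∑ l : Fin 2, (1 / 2 : ℂ) • (depol lam (Matrix.single k l (1 : ℂ)) ⊗ₖ
      (depol lam (Matrix.single k l (1 : ℂ)) ⊗ₖ depol lam (Matrix.single k l (1 : ℂ)))) := by
  have hE := depol_linMap lam
  have hE2 := hE.tensorMap hE
  have hE3 := hE.tensorMap hE2
  rw [ghzState_eq, hE3.map_sum]
  refine Finset.sum_congr rfl fun k _ => ?_
  rw [hE3.map_sum]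
  refine Finset.sum_congr rfl fun l _ => ?_
  rw [hE3.map_smul, tensorMap_kronecker hE hE2, tensorMap_kronecker hE hE]

lemma ghz_eigenvector (lam : ℝ) :
    ∃ v : (Fin 2 × Fin 2 × Fin 2) → ℂ, v ≠ 0 ∧
      (pt1 (tensorMap (depol lam) (tensorMap (depol lam) (depol lam)) ghzState)).mulVec v
        = ((((1 - lam ^ 2) / 4 - lam ^ 3) / 2 : ℝ) : ℂ) • v := by
  refine ⟨fun p => if p = (1, 0, 0) then 1 else if p = (0, 1, 1) then -1 else 0, ?_, ?_⟩
  · intro h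
    have := congrFun h (1, 0, 0)
    simp at this
  · have e00 : depol lam (Matrix.single 0 0 (1 : ℂ)) = !![(1 + lam : ℂ) / 2, 0; 0, (1 - lam : ℂ) / 2] := by
      ext i j
      fin_cases i <;> fin_cases j <;> simp [depol, Matrix.trace_fin_two] <;> ring
    have e11 : depol lam (Matrix.single 1 1 (1 : ℂ)) = !![(1 - lam : ℂ) / 2, 0; 0, (1 + lam : ℂ) / 2] := by
      ext i j
      fin_cases i <;> fin_cases j <;> simp [depol, Matrix.trace_fin_two] <;> ring
    have e01 : depol lam (Matrix.single 0 1 (1 : ℂ)) = !![0, (lam : ℂ); 0, 0] := by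
      ext i j
      fin_cases i <;> fin_cases j <;> simp [depol, Matrix.trace_fin_two]
    have e10 : depol lam (Matrix.single 1 0 (1 : ℂ)) = !![0, 0; (lam : ℂ), 0] := by
      ext i j
      fin_cases i <;> fin_cases j <;> simp [depol, Matrix.trace_fin_two]
    rw [depol_ghz]
    simp only [Fin.sum_univ_two, e00, e01, e10, e11]
    ext ⟨i, j, k⟩
    simp only [Matrix.mulVec, dotProduct, Fintype.sum_prod_type, Fin.sum_univ_two, pt1,
      Matrix.of_apply, Matrix.add_apply, Matrix.smul_apply, Matrix.kroneckerMap_apply,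
      Pi.smul_apply, smul_eq_mul]
    fin_cases i <;> fin_cases j <;> fin_cases k <;> simp <;> ring

/-! ### 3-LEA channels are 2-LEA -/

lemma is2LEA_of_is3LEA {E : Matrix (Fin 2) (Fin 2) ℂ → Matrix (Fin 2) (Fin 2) ℂ}
    (hE : IsChannel E) (h : Is3LEA E) : Is2LEA E := by
  intro ω hω
  have hlin : LinMap E := hE.1
  let Ω : Matrix (Fin 2 × Fin 2 × Fin 2) (Fin 2 × Fin 2 × Fin 2) ℂ :=
    (ω ⊗ₖ zeroState).submatrix (fun p => ((p.1, p.2.1), p.2.2)) (fun p => ((p.1, p.2.1), p.2.2))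
  have hΩ : IsState Ω := by
    refine ⟨(hω.1.kronecker zeroState_isState.1).submatrix _, ?_⟩
    have : Ω.trace = (ω ⊗ₖ zeroState).trace := by
      simp only [Ω, Matrix.trace, Matrix.diag_apply, Matrix.submatrix_apply,
        Fintype.sum_prod_type]
    rw [this, Matrix.trace_kronecker, hω.2, zeroState_isState.2, one_mul]
  have hout : ∀ i j k i' j' k', tensorMap E (tensorMap E E) Ω (i, j, k) (i', j', k') =
      tensorMap E E ω (i, j) (i', j') * E zeroState k k' := by
    intro i j k i' j' k'
    have s1 : ∀ i j k i' j' k', rTensor E Ω (i, j, k) (i', j', k') =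
        rTensor E ω (i, j) (i', j') * zeroState k k' := by
      intro i j k i' j' k'
      have : (Matrix.of fun a c => Ω (a, (j, k)) (c, (j', k'))) =
          zeroState k k' • (Matrix.of fun a c => ω (a, j) (c, j')) := by
        ext a c
        simp [Ω, Matrix.kroneckerMap_apply, mul_comm]
      simp only [rTensor, Matrix.of_apply]
      rw [this, hlin.map_smul, Matrix.smul_apply, smul_eq_mul, mul_comm]
    have s2 : (Matrix.of fun (b : Fin 2 × Fin 2) (d : Fin 2 × Fin 2) =>
        rTensor E Ω (i, b) (i', d)) =
        (Matrix.of fun b d => rTensor E ω (i, b) (i', d)) ⊗ₖ zeroState := by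
      ext ⟨b1, b2⟩ ⟨d1, d2⟩
      simp only [Matrix.of_apply, Matrix.kroneckerMap_apply]
      exact s1 i b1 b2 i' d1 d2
    change tensorMap E E (Matrix.of fun b d => rTensor E Ω (i, b) (i', d)) (j, k) (j', k') = _
    rw [s2, tensorMap_kronecker hlin hlin]
    rfl
  obtain ⟨m, p, a, b, c, hp, hsum, hst, hdec⟩ := h Ω hΩ
  refine ⟨m, p, a, b, hp, hsum, fun j => (hst j).1, fun j => (hst j).2.1, ?_⟩
  have htr : E zeroState 0 0 + E zeroState 1 1 = 1 := by
    rw [← Matrix.trace_fin_two, hE.2.1, zeroState_isState.2]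
  have hc : ∀ j, c j 0 0 + c j 1 1 = 1 := fun j => by
    rw [← Matrix.trace_fin_two, (hst j).2.2.2]
  ext ⟨i, j⟩ ⟨i', j'⟩
  have h0 := hout i j 0 i' j' 0
  have h1 := hout i j 1 i' j' 1
  rw [hdec] at h0 h1
  have : tensorMap E E ω (i, j) (i', j') =
      tensorMap E E ω (i, j) (i', j') * E zeroState 0 0
        + tensorMap E E ω (i, j) (i', j') * E zeroState 1 1 := by
    rw [← mul_add, htr, mul_one]
  rw [this, ← h0, ← h1]
  simp only [Matrix.sum_apply, Matrix.smul_apply, Matrix.kroneckerMap_apply, smul_eq_mul]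
  rw [← Finset.sum_add_distrib]
  refine Finset.sum_congr rfl fun t _ => ?_
  linear_combination ((p t : ℂ) * (a t i i' * b t j j')) * hc t

/-- the partial transpose of `E_λ^{⊗3}[|GHZ⟩⟨GHZ|]` across the `1|23`
cut has eigenvalue `μ₋ = ((1-λ²)/4 - λ³)/2`, which is negative whenever
`(1-λ²)/4 < λ³`; in particular for `λ = 1/√3`, so that `E_{1/√3}^{⊗3}[|GHZ⟩⟨GHZ|]` is
entangled across the `1|23` cut and not fully separable. Consequently `E_{1/√3}` is
2-LEA but not 3-LEA, i.e. `T_{3-LEA} ⊊ T_{2-LEA}`. -/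
theorem stmt_16 :
    (∀ lam : ℝ, 0 ≤ lam → lam ≤ 1 →
      ∃ v : (Fin 2 × Fin 2 × Fin 2) → ℂ, v ≠ 0 ∧
        (pt1 (tensorMap (depol lam) (tensorMap (depol lam) (depol lam)) ghzState)).mulVec v
          = ((((1 - lam ^ 2) / 4 - lam ^ 3) / 2 : ℝ) : ℂ) • v) ∧
    (∀ lam : ℝ, (1 - lam ^ 2) / 4 < lam ^ 3 → (((1 - lam ^ 2) / 4 - lam ^ 3) / 2 : ℝ) < 0) ∧
    ((((1 - ((Real.sqrt 3)⁻¹) ^ 2) / 4 - ((Real.sqrt 3)⁻¹) ^ 3) / 2 : ℝ) < 0) ∧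
    ¬ IsSep (tensorMap (depol (Real.sqrt 3)⁻¹)
      (tensorMap (depol (Real.sqrt 3)⁻¹) (depol (Real.sqrt 3)⁻¹)) ghzState) ∧
    ¬ IsFullySep3 (tensorMap (depol (Real.sqrt 3)⁻¹)
      (tensorMap (depol (Real.sqrt 3)⁻¹) (depol (Real.sqrt 3)⁻¹)) ghzState) ∧
    Is2LEA (depol (Real.sqrt 3)⁻¹) ∧
    ¬ Is3LEA (depol (Real.sqrt 3)⁻¹) ∧
    {E : Matrix (Fin 2) (Fin 2) ℂ → Matrix (Fin 2) (Fin 2) ℂ | IsChannel E ∧ Is3LEA E}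
      ⊂ {E : Matrix (Fin 2) (Fin 2) ℂ → Matrix (Fin 2) (Fin 2) ℂ | IsChannel E ∧ Is2LEA E}
    := by
  have hpos : 0 < Real.sqrt 3 := Real.sqrt_pos.mpr (by norm_num)
  have hsq : ((Real.sqrt 3)⁻¹) ^ 2 = 1 / 3 := by
    rw [inv_pow, Real.sq_sqrt (by norm_num)]
    norm_num
  have hl0 : 0 ≤ (Real.sqrt 3)⁻¹ := (inv_pos.mpr hpos).le
  have hl1 : (Real.sqrt 3)⁻¹ ≤ 1 := by nlinarith
  have hneg : (((1 - ((Real.sqrt 3)⁻¹) ^ 2) / 4 - ((Real.sqrt 3)⁻¹) ^ 3) / 2 : ℝ) < 0 := by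
    have hhalf : 1 / 2 < (Real.sqrt 3)⁻¹ := by nlinarith
    have hcube : ((Real.sqrt 3)⁻¹) ^ 3 = 1 / 3 * (Real.sqrt 3)⁻¹ := by rw [pow_succ, hsq]
    rw [hcube, hsq]
    linarith
  have hnsep := not_isSep_of_neg_eigenvalue hneg (ghz_eigenvector (Real.sqrt 3)⁻¹)
  have hnfull : ¬ IsFullySep3 (tensorMap (depol (Real.sqrt 3)⁻¹)
      (tensorMap (depol (Real.sqrt 3)⁻¹) (depol (Real.sqrt 3)⁻¹)) ghzState) :=
    fun h => hnsep (isSep_of_isFullySep3 h)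
  have h2 : Is2LEA (depol (Real.sqrt 3)⁻¹) := depol_is2LEA hl0 hl1 hsq.le
  have hn3 : ¬ Is3LEA (depol (Real.sqrt 3)⁻¹) := fun h => hnfull (h ghzState ghzState_isState)
  refine ⟨fun lam _ _ => ghz_eigenvector lam, fun lam h => by linarith, hneg, hnsep, hnfull, h2,
    hn3, ?_⟩
  refine ⟨fun E hE => ⟨hE.1, is2LEA_of_is3LEA hE.1 hE.2⟩, fun hsub => ?_⟩
  exact hn3 (hsub ⟨depol_isChannel hl0 hl1, h2⟩).2
end
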